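/- Let p ∈ [1,∞), d > 1, and let μ, ν be probability measures on ℝ^d with finite p-th moments whose joint distribution functions are H_μ(x₁,…,x_d) = min{F₁(x₁),…,F_d(x_d)} and H_ν(y₁,…,y_d) = min{G₁(y₁),…,G_d(y_d)}, where F_i and G_i are the marginal distribution functions of μ and ν respectively (i.e. both μ and ν have the comonotonicity copula M). Then, with ℝ^d equipped with the p-norm, W_p(μ,ν)^p = Σ_{i=1}^d ∫_{ℝ×ℝ} |x_i − y_i|^p dπ_i(x_i,y_i), where π_i is the unique probability measure on ℝ² with joint distribution function min{F_i(x_i), G_i(y_i)}; equivalently W_p(μ,ν)^p = Σ_{i=1}^d ∫₀¹ |F_i⁻¹(u) − G_i⁻¹(u)|^p du. -/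

import Mathlib

/-!
If `U` is uniform on `(0, 1)`, a law on `ℝ^d` with the comonotonicity copula is the law of
`(F₁⁻¹(U), …, F_d⁻¹(U))` (`map_quantile`). Using the same `U` for `μ` and `ν` gives a coupling whose
cost is `∑ i, ∫₀¹ |F_i⁻¹ - G_i⁻¹| ^ p`. Conversely the `p`-norm cost splits over the coordinates, and
the `i`-th coordinates of any coupling form a coupling of the `i`-th marginals, so it suffices that the
comonotone coupling is optimal on the line.

On the line, every coupling `π` satisfies `π((-∞, x] × (-∞, y]) ≤ min (F x) (G y)`, with equality for
the comonotone one (`quantileCoupling_Iic`). Optimality is therefore monotonicity of the cost in the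
joint distribution function (`lintegral_abs_rpow_mono`). Since `|z| ^ p` is convex and even, it is a
mixture `∫ ((z - t)⁺ + (-z - t)⁺) dm(t)` over `t ≥ 0` (`exists_measure_abs_rpow`), and
`∫ (x - y - t)⁺ dπ = ∫ π((s, ∞) × (-∞, s - t]) ds` (`lintegral_ofReal_sub_sub`), where the integrand is
the mass of `(-∞, s - t]` under the second marginal minus the joint distribution function at
`(s, s - t)`.

The measures `π_i` of the statement equal the comonotone couplings because a joint distribution
function determines the measure.
-/

open MeasureTheory ENNReal Set

/-- Generalized inverse (quantile function) of a distribution function `F`. -/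
noncomputable def qinv (F : ℝ → ℝ) (u : ℝ) : ℝ := sInf {x : ℝ | u ≤ F x}

/-- `π` is a coupling of `μ` and `ν`. -/
def IsCoupling {α : Type*} [MeasurableSpace α] (π : MeasureTheory.Measure (α × α))
    (μ ν : MeasureTheory.Measure α) : Prop :=
  π.map Prod.fst = μ ∧ π.map Prod.snd = ν

/-- The `p`-th power of the `p`-Wasserstein distance on `ℝ^d` equipped with the
`p`-norm: `W_p(μ,ν)^p = inf over couplings π of ∫ ‖x-y‖_p^p dπ`, where
`‖x-y‖_p^p = ∑ i, |x i - y i|^p`. -/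
noncomputable def WpPowD (d : ℕ) (p : ℝ) (μ ν : MeasureTheory.Measure (Fin d → ℝ)) : ℝ≥0∞ :=
  ⨅ π ∈ {π : MeasureTheory.Measure ((Fin d → ℝ) × (Fin d → ℝ)) | IsCoupling π μ ν},
    ∫⁻ z, ENNReal.ofReal (∑ i, |z.1 i - z.2 i| ^ p) ∂π

/-! ### Generalized inverses of distribution functions -/

/-- The Galois connection between a distribution function and its generalized inverse. It holds on
`(0, 1)`, where the set defining `qinv` is nonempty and bounded below, so that `sInf` takes no junk
value. -/
lemma qinv_le_iff (m : Measure ℝ) [IsProbabilityMeasure m] {F : ℝ → ℝ}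
    (hF : ∀ t, F t = (m (Iic t)).toReal) {u : ℝ} (hu : u ∈ Ioo (0:ℝ) 1) (x : ℝ) :
    qinv F u ≤ x ↔ u ≤ F x := by
  have hFc : F = ProbabilityTheory.cdf m := by
    ext t; rw [hF, ProbabilityTheory.cdf_eq_real]; rfl
  subst hFc
  have hne : {x : ℝ | u ≤ ProbabilityTheory.cdf m x}.Nonempty :=
    ((ProbabilityTheory.tendsto_cdf_atTop m).eventually (eventually_ge_nhds hu.2)).exists
  obtain ⟨b, hb⟩ := Filter.eventually_atBot.1
    ((ProbabilityTheory.tendsto_cdf_atBot m).eventually (eventually_lt_nhds hu.1))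
  have hbdd : BddBelow {x : ℝ | u ≤ ProbabilityTheory.cdf m x} := by
    refine ⟨b, fun y hy => ?_⟩
    by_contra! h
    exact absurd (hb y h.le) (not_lt.2 hy)
  constructor
  · intro h
    -- `u ≤ F y` for every `y > x`, and `F` is right-continuous at `x`
    have hgt : ∀ y, x < y → u ≤ ProbabilityTheory.cdf m y := by
      intro y hy
      obtain ⟨z, hz, hzy⟩ := exists_lt_of_csInf_lt hne (h.trans_lt hy)
      exact le_trans hz (ProbabilityTheory.monotone_cdf m hzy.le)
    have hc := ((ProbabilityTheory.cdf m).right_continuous x).mono_left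
      (nhdsWithin_mono x Ioi_subset_Ici_self)
    exact ge_of_tendsto hc (Filter.eventually_of_mem self_mem_nhdsWithin fun y hy => hgt y hy)
  · exact fun h => csInf_le hbdd h

lemma aemeasurable_qinv (m : Measure ℝ) [IsProbabilityMeasure m] {F : ℝ → ℝ}
    (hF : ∀ t, F t = (m (Iic t)).toReal) :
    AEMeasurable (qinv F) (volume.restrict (Ioo (0:ℝ) 1)) := by
  refine aemeasurable_restrict_of_monotoneOn measurableSet_Ioo fun u hu v hv huv => ?_
  rw [qinv_le_iff m hF hu]
  exact huv.trans ((qinv_le_iff m hF hv _).1 le_rfl)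

lemma volume_Ioo_inter_le {c : ℝ} (h1 : c ≤ 1) :
    volume ({u : ℝ | u ≤ c} ∩ Ioo (0:ℝ) 1) = ENNReal.ofReal c := by
  apply le_antisymm
  · refine (measure_mono (t := Icc 0 c) fun u hu => ⟨hu.2.1.le, hu.1⟩).trans ?_
    simp
  · refine le_trans ?_ (measure_mono (s := Ioo 0 c) fun u hu => ⟨hu.2.le, hu.1, hu.2.trans_le h1⟩)
    simp

/-! ### Measures determined by their joint distribution functions -/

lemma isCountablySpanning_range_Iic : IsCountablySpanning (range (Iic : ℝ → Set ℝ)) := by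
  refine ⟨fun n : ℕ => Iic (n : ℝ), fun n => ⟨n, rfl⟩, eq_univ_of_forall fun x => ?_⟩
  obtain ⟨n, hn⟩ := exists_nat_ge x
  exact mem_iUnion.2 ⟨n, hn⟩

lemma generateFrom_range_Iic :
    MeasurableSpace.generateFrom (range (Iic : ℝ → Set ℝ)) = Real.measurableSpace := by
  rw [← borel_eq_generateFrom_Iic ℝ]
  exact (BorelSpace.measurable_eq (α := ℝ)).symm

/-- A probability measure on `ℝ²` is determined by its joint distribution function. -/
lemma ext_of_Iic_prod {π τ : Measure (ℝ × ℝ)} [IsProbabilityMeasure π] [IsProbabilityMeasure τ]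
    (h : ∀ x y : ℝ, π (Iic x ×ˢ Iic y) = τ (Iic x ×ˢ Iic y)) : π = τ := by
  refine ext_of_generate_finite _ (generateFrom_eq_prod generateFrom_range_Iic generateFrom_range_Iic
    isCountablySpanning_range_Iic isCountablySpanning_range_Iic).symm
    (isPiSystem_Iic.prod isPiSystem_Iic) ?_ (by simp)
  rintro _ ⟨_, ⟨x, rfl⟩, _, ⟨y, rfl⟩, rfl⟩
  exact h x y

/-- A probability measure on `ℝ^d` is determined by its joint distribution function. -/
lemma ext_of_Iic_pi {d : ℕ} {π τ : Measure (Fin d → ℝ)} [IsProbabilityMeasure π]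
    [IsProbabilityMeasure τ]
    (h : ∀ x : Fin d → ℝ, π {y | ∀ i, y i ≤ x i} = τ {y | ∀ i, y i ≤ x i}) : π = τ := by
  refine ext_of_generate_finite _ (generateFrom_eq_pi (fun _ => generateFrom_range_Iic)
    (fun _ => isCountablySpanning_range_Iic)).symm
    (IsPiSystem.pi fun _ => isPiSystem_Iic) ?_ (by simp)
  rintro _ ⟨s, hs, rfl⟩
  choose x hx using fun i => hs i (mem_univ i)
  have : univ.pi s = {y | ∀ i, y i ≤ x i} := by
    ext y; simp [← hx]
  rw [this, h]

/-! ### Monotonicity of the cost in the joint distribution function -/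

/-- Writing `(x - y - t)⁺` as the length of `[y + t, x)` and applying Tonelli expresses its integral
through the masses of quadrants. -/
lemma lintegral_ofReal_sub_sub (π : Measure (ℝ × ℝ)) [IsProbabilityMeasure π] (t : ℝ) :
    ∫⁻ z, ENNReal.ofReal (z.1 - z.2 - t) ∂π = ∫⁻ s, π (Ioi s ×ˢ Iic (s - t)) := by
  have hS : MeasurableSet ({w : (ℝ × ℝ) × ℝ | w.1.2 + t ≤ w.2} ∩ {w | w.2 < w.1.1}) :=
    (measurableSet_le (by fun_prop) (by fun_prop)).inter
      (measurableSet_lt (by fun_prop) (by fun_prop))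
  have h1 := Measure.prod_apply (μ := π) (ν := (volume : Measure ℝ)) hS
  rw [Measure.prod_apply_symm hS] at h1
  refine Eq.trans ?_ (h1.symm.trans ?_)
  · refine lintegral_congr fun z => ?_
    have : Prod.mk z ⁻¹' ({w : (ℝ × ℝ) × ℝ | w.1.2 + t ≤ w.2} ∩ {w | w.2 < w.1.1})
        = Ico (z.2 + t) z.1 := by
      ext s; simp
    rw [this, Real.volume_Ico, sub_sub]
  · refine lintegral_congr fun s => congrArg π ?_
    ext z
    simp [le_sub_iff_add_le, and_comm]

/-- A pointwise larger joint distribution function, with the same second marginal, gives less mass to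
every quadrant `(s, ∞) × (-∞, r]`, hence a smaller integral of `(x - y - t)⁺`. No integrability is
needed, since everything takes place in `ℝ≥0∞`. -/
lemma lintegral_ofReal_sub_sub_mono {π τ : Measure (ℝ × ℝ)} [IsProbabilityMeasure π]
    [IsProbabilityMeasure τ] (hsnd : π.map Prod.snd = τ.map Prod.snd)
    (h : ∀ x y : ℝ, π (Iic x ×ˢ Iic y) ≤ τ (Iic x ×ˢ Iic y)) (t : ℝ) :
    ∫⁻ z, ENNReal.ofReal (z.1 - z.2 - t) ∂τ ≤ ∫⁻ z, ENNReal.ofReal (z.1 - z.2 - t) ∂π := by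
  rw [lintegral_ofReal_sub_sub, lintegral_ofReal_sub_sub]
  refine lintegral_mono fun s => ?_
  have key : ∀ (ρ : Measure (ℝ × ℝ)) (r : ℝ),
      ρ.map Prod.snd (Iic r) = ρ (Iic s ×ˢ Iic r) + ρ (Ioi s ×ˢ Iic r) := by
    intro ρ r
    rw [Measure.map_apply measurable_snd measurableSet_Iic, ← measure_union
      (by rw [Set.disjoint_left]; rintro z ⟨h1, -⟩ ⟨h2, -⟩; exact not_le_of_gt (mem_Ioi.1 h2) h1)
      (measurableSet_Ioi.prod measurableSet_Iic), ← union_prod, Iic_union_Ioi, univ_prod]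
  have h1 := key π (s - t)
  rw [hsnd, key τ] at h1
  have h2 : τ (Ioi s ×ˢ Iic (s - t)) + τ (Iic s ×ˢ Iic (s - t))
      ≤ π (Ioi s ×ˢ Iic (s - t)) + τ (Iic s ×ˢ Iic (s - t)) := by
    rw [add_comm, h1, add_comm]
    exact add_le_add_right (h _ _) _
  exact (ENNReal.add_le_add_iff_right (measure_ne_top _ _)).1 h2

/-- Taylor's formula with integral remainder for the convex function `z ↦ z ^ p` on `[0, ∞)`: the
measure `m` is its second derivative, with density `p (p - 1) t ^ (p - 2)` when `p > 1`, and the unit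
mass at `0` when `p = 1`. -/
lemma exists_measure_rpow_nonneg {p : ℝ} (hp : 1 ≤ p) : ∃ m : Measure ℝ, SFinite m ∧
    m (Iio 0) = 0 ∧
    ∀ z : ℝ, 0 ≤ z → ENNReal.ofReal (z ^ p) = ∫⁻ t, ENNReal.ofReal (z - t) ∂m := by
  rcases hp.eq_or_lt with rfl | hp
  · exact ⟨Measure.dirac 0, inferInstance, by simp, fun z hz => by simp⟩
  · refine ⟨(volume.restrict (Ioi 0)).withDensity
      fun t => ENNReal.ofReal (p * (p - 1) * t ^ (p - 2)), inferInstance, ?_, fun z hz => ?_⟩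
    · refine withDensity_absolutelyContinuous _ _ ?_
      rw [Measure.restrict_apply measurableSet_Iio]
      have : Iio (0:ℝ) ∩ Ioi 0 = ∅ := by ext x; simp; intro h; exact h.le
      simp [this]
    · rw [lintegral_withDensity_eq_lintegral_mul _ (by fun_prop) (by fun_prop)]
      have h1 : ∀ t ∈ Ioi (0:ℝ), ENNReal.ofReal (p * (p - 1) * t ^ (p - 2)) * ENNReal.ofReal (z - t)
          = (Ioc 0 z).indicator (fun t => ENNReal.ofReal
            (p * (p - 1) * z * t ^ (p - 2) - p * (p - 1) * t ^ (p - 1))) t := by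
        intro t (ht : 0 < t)
        by_cases h : t ≤ z
        · rw [indicator_of_mem (show t ∈ Ioc 0 z from ⟨ht, h⟩), ← ENNReal.ofReal_mul]
          · congr 1
            rw [show p - 1 = p - 2 + 1 by ring, Real.rpow_add_one ht.ne']
            ring
          · have : 0 < p - 1 := by linarith
            positivity
        · rw [indicator_of_notMem (show t ∉ Ioc 0 z from fun hh => h hh.2),
            ENNReal.ofReal_of_nonpos (p := z - t) (by linarith),
            mul_zero]
      have hi2 : IntervalIntegrable (fun t : ℝ => p * (p - 1) * z * t ^ (p - 2)) volume 0 z :=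
        (intervalIntegral.intervalIntegrable_rpow' (by linarith)).const_mul _
      have hi1 : IntervalIntegrable (fun t : ℝ => p * (p - 1) * t ^ (p - 1)) volume 0 z :=
        (intervalIntegral.intervalIntegrable_rpow' (by linarith)).const_mul _
      simp only [Pi.mul_apply]
      rw [setLIntegral_congr_fun measurableSet_Ioi h1, setLIntegral_indicator measurableSet_Ioc,
        show Ioc 0 z ∩ Ioi 0 = Ioc 0 z from inter_eq_left.2 fun x hx => hx.1,
        ← ofReal_integral_eq_lintegral_ofReal]
      · rw [← intervalIntegral.integral_of_le hz, intervalIntegral.integral_sub hi2 hi1,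
          intervalIntegral.integral_const_mul, intervalIntegral.integral_const_mul,
          integral_rpow (Or.inl (by linarith)), integral_rpow (Or.inl (by linarith))]
        congr 1
        rw [show p - 2 + 1 = p - 1 by ring, show p - 1 + 1 = p by ring,
          Real.zero_rpow (by linarith), Real.zero_rpow (by linarith)]
        have : p - 1 ≠ 0 := by linarith
        have hp0 : p ≠ 0 := by linarith
        rcases hz.eq_or_lt with rfl | hz
        · simp [Real.zero_rpow hp0, Real.zero_rpow this]
        · rw [Real.rpow_sub_one hz.ne']
          field_simp
          ring
      · exact (intervalIntegrable_iff_integrableOn_Ioc_of_le hz).1 (hi2.sub hi1)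
      · refine (ae_restrict_iff' measurableSet_Ioc).2 (Filter.Eventually.of_forall fun t ht => ?_)
        have : p * (p - 1) * z * t ^ (p - 2) - p * (p - 1) * t ^ (p - 1)
            = p * (p - 1) * t ^ (p - 2) * (z - t) := by
          rw [show p - 1 = p - 2 + 1 by ring, Real.rpow_add_one ht.1.ne']
          ring
        simp only [Pi.zero_apply]
        rw [this]
        have h1 : 0 < p - 1 := by linarith
        have h2 : 0 ≤ z - t := by linarith [ht.2]
        have h3 := ht.1
        positivity

/-- The two-sided form of `exists_measure_rpow_nonneg`: as `m` lives on `[0, ∞)`, at most one of the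
two summands is nonzero. -/
lemma exists_measure_abs_rpow {p : ℝ} (hp : 1 ≤ p) : ∃ m : Measure ℝ, SFinite m ∧
    ∀ z : ℝ, ENNReal.ofReal (|z| ^ p)
      = ∫⁻ t, (ENNReal.ofReal (z - t) + ENNReal.ofReal (-z - t)) ∂m := by
  obtain ⟨m, hm, hm0, h⟩ := exists_measure_rpow_nonneg hp
  have hae : ∀ᵐ t ∂m, 0 ≤ t := by
    rw [ae_iff]; simp only [not_le]; exact hm0
  refine ⟨m, hm, fun z => ?_⟩
  rw [h _ (abs_nonneg z)]
  refine lintegral_congr_ae (hae.mono fun t ht => ?_)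
  rcases le_total 0 z with hz | hz
  · simp only [abs_of_nonneg hz]
    rw [ENNReal.ofReal_of_nonpos (p := -z - t) (by linarith), add_zero]
  · simp only [abs_of_nonpos hz]
    rw [ENNReal.ofReal_of_nonpos (p := z - t) (by linarith), zero_add]

/-- Among measures on `ℝ²` with given marginals, the cost `∫ |x - y| ^ p` decreases when the joint
distribution function increases. -/
lemma lintegral_abs_rpow_mono {p : ℝ} (hp : 1 ≤ p) {π τ : Measure (ℝ × ℝ)}
    [IsProbabilityMeasure π] [IsProbabilityMeasure τ]
    (hfst : π.map Prod.fst = τ.map Prod.fst) (hsnd : π.map Prod.snd = τ.map Prod.snd)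
    (h : ∀ x y : ℝ, π (Iic x ×ˢ Iic y) ≤ τ (Iic x ×ˢ Iic y)) :
    ∫⁻ z, ENNReal.ofReal (|z.1 - z.2| ^ p) ∂τ ≤ ∫⁻ z, ENNReal.ofReal (|z.1 - z.2| ^ p) ∂π := by
  obtain ⟨m, hm, hrep⟩ := exists_measure_abs_rpow hp
  simp only [hrep]
  rw [lintegral_lintegral_swap (μ := τ) (by fun_prop),
    lintegral_lintegral_swap (μ := π) (by fun_prop)]
  refine lintegral_mono fun t => ?_
  rw [lintegral_add_left (by fun_prop), lintegral_add_left (by fun_prop)]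
  refine add_le_add (lintegral_ofReal_sub_sub_mono hsnd h t) ?_
  have hsw : ∀ ρ : Measure (ℝ × ℝ), ∫⁻ z, ENNReal.ofReal (-(z.1 - z.2) - t) ∂ρ
      = ∫⁻ z, ENNReal.ofReal (z.1 - z.2 - t) ∂(ρ.map Prod.swap) := by
    intro ρ
    rw [lintegral_map (by fun_prop) measurable_swap]
    simp
  have hπ : IsProbabilityMeasure (π.map Prod.swap) :=
    Measure.isProbabilityMeasure_map measurable_swap.aemeasurable
  have hτ : IsProbabilityMeasure (τ.map Prod.swap) :=
    Measure.isProbabilityMeasure_map measurable_swap.aemeasurable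
  rw [hsw, hsw]
  refine lintegral_ofReal_sub_sub_mono ?_ (fun x y => ?_) t
  · rw [Measure.map_map measurable_snd measurable_swap, Measure.map_map measurable_snd measurable_swap]
    exact hfst
  · rw [Measure.map_apply measurable_swap (measurableSet_Iic.prod measurableSet_Iic),
      Measure.map_apply measurable_swap (measurableSet_Iic.prod measurableSet_Iic),
      preimage_swap_prod]
    exact h y x

/-! ### Comonotone couplings -/

instance isProbabilityMeasure_Ioo : IsProbabilityMeasure (volume.restrict (Ioo (0:ℝ) 1)) :=
  ⟨by simp⟩

/-- The comonotone coupling of two laws on `ℝ` with distribution functions `F` and `G`: the law of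
`(F⁻¹(U), G⁻¹(U))` for `U` uniform on `(0, 1)`. -/
noncomputable def quantileCoupling (F G : ℝ → ℝ) : Measure (ℝ × ℝ) :=
  (volume.restrict (Ioo (0:ℝ) 1)).map fun u => (qinv F u, qinv G u)

lemma quantileCoupling_Iic {m n : Measure ℝ} [IsProbabilityMeasure m] [IsProbabilityMeasure n]
    {F G : ℝ → ℝ} (hF : ∀ t, F t = (m (Iic t)).toReal) (hG : ∀ t, G t = (n (Iic t)).toReal)
    (x y : ℝ) : quantileCoupling F G (Iic x ×ˢ Iic y) = min (m (Iic x)) (n (Iic y)) := by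
  rw [quantileCoupling, Measure.map_apply_of_aemeasurable
    ((aemeasurable_qinv m hF).prodMk (aemeasurable_qinv n hG))
    (measurableSet_Iic.prod measurableSet_Iic), Measure.restrict_apply' measurableSet_Ioo]
  have : ((fun u => (qinv F u, qinv G u)) ⁻¹' (Iic x ×ˢ Iic y)) ∩ Ioo 0 1
      = {u | u ≤ min (F x) (G y)} ∩ Ioo 0 1 := by
    ext u
    refine and_congr_left fun hu => ?_
    simp [qinv_le_iff m hF hu, qinv_le_iff n hG hu]
  rw [this, volume_Ioo_inter_le (min_le_of_left_le (by
    rw [hF]; exact measureReal_le_one)), ENNReal.ofReal_min, hF, hG,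
    ENNReal.ofReal_toReal (measure_ne_top _ _), ENNReal.ofReal_toReal (measure_ne_top _ _)]

/-- A law on `ℝ^d` with the comonotonicity copula is the law of `(F₁⁻¹(U), …, F_d⁻¹(U))`, with a single
uniform variable `U` on `(0, 1)`. -/
lemma map_quantile {d : ℕ} (hd : 1 < d) (μ : Measure (Fin d → ℝ)) [IsProbabilityMeasure μ]
    (F : Fin d → ℝ → ℝ) (hF : ∀ i t, F i t = ((μ.map fun z => z i) (Iic t)).toReal)
    (hμM : ∀ x : Fin d → ℝ, (μ {y | ∀ i, y i ≤ x i}).toReal = ⨅ i, F i (x i)) :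
    (volume.restrict (Ioo (0:ℝ) 1)).map (fun u i => qinv (F i) u) = μ := by
  have hprob : ∀ i, IsProbabilityMeasure (μ.map fun z => z i) := fun i =>
    Measure.isProbabilityMeasure_map (measurable_pi_apply i).aemeasurable
  have hae : AEMeasurable (fun u i => qinv (F i) u) (volume.restrict (Ioo (0:ℝ) 1)) :=
    aemeasurable_pi_iff.2 fun i => aemeasurable_qinv _ (hF i)
  have := Measure.isProbabilityMeasure_map hae
  have : Nonempty (Fin d) := ⟨⟨0, by omega⟩⟩
  refine ext_of_Iic_pi fun x => ?_
  have hms : MeasurableSet {y : Fin d → ℝ | ∀ i, y i ≤ x i} := measurableSet_Iic (a := x)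
  rw [Measure.map_apply_of_aemeasurable hae hms, Measure.restrict_apply' measurableSet_Ioo]
  have hset : ((fun u i => qinv (F i) u) ⁻¹' {y | ∀ i, y i ≤ x i}) ∩ Ioo 0 1
      = {u | u ≤ ⨅ i, F i (x i)} ∩ Ioo 0 1 := by
    ext u
    refine and_congr_left fun hu => ?_
    simp only [mem_preimage, mem_ofPred_eq, qinv_le_iff _ (hF _) hu]
    exact (le_ciInf_iff (finite_range _).bddBelow).symm
  rw [hset, ← hμM, volume_Ioo_inter_le (by exact measureReal_le_one),
    ENNReal.ofReal_toReal (measure_ne_top _ _)]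

/-- if `μ, ν` on `ℝ^d` both have the comonotonicity copula `M`, i.e. the
joint distribution functions are `H_μ(x) = min_i F_i(x_i)` and `H_ν(y) = min_i G_i(y_i)`,
then (with the `p`-norm) `W_p(μ,ν)^p = ∑ i ∫ |x_i - y_i|^p dπ_i` where `π_i` is the
unique probability measure on `ℝ²` with joint distribution function
`min {F_i(x_i), G_i(y_i)}`; equivalently `W_p(μ,ν)^p = ∑ i ∫₀¹ |F_i⁻¹(u) - G_i⁻¹(u)|^p du`. -/
theorem wasserstein_comonotone_copula (d : ℕ) (hd : 1 < d) (p : ℝ) (hp : 1 ≤ p)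
    (μ ν : MeasureTheory.Measure (Fin d → ℝ)) [IsProbabilityMeasure μ] [IsProbabilityMeasure ν]
    (hμmom : ∫⁻ x, ENNReal.ofReal (∑ i, |x i| ^ p) ∂μ ≠ ⊤)
    (hνmom : ∫⁻ x, ENNReal.ofReal (∑ i, |x i| ^ p) ∂ν ≠ ⊤)
    (F G : Fin d → ℝ → ℝ)
    (hF : ∀ i t, F i t = (μ {x | x i ≤ t}).toReal)
    (hG : ∀ i t, G i t = (ν {x | x i ≤ t}).toReal)
    (hμM : ∀ x : Fin d → ℝ, (μ {y | ∀ i, y i ≤ x i}).toReal = ⨅ i, F i (x i))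
    (hνM : ∀ y : Fin d → ℝ, (ν {z | ∀ i, z i ≤ y i}).toReal = ⨅ i, G i (y i)) :
    (∀ πs : Fin d → MeasureTheory.Measure (ℝ × ℝ),
        (∀ i, IsProbabilityMeasure (πs i) ∧
          ∀ x y : ℝ, πs i (Iic x ×ˢ Iic y)
            = min ((μ.map fun z => z i) (Iic x)) ((ν.map fun z => z i) (Iic y))) →
        WpPowD d p μ ν = ∑ i, ∫⁻ z, ENNReal.ofReal (|z.1 - z.2| ^ p) ∂(πs i)) ∧
      WpPowD d p μ ν
        = ∑ i, ∫⁻ u in Ioo (0:ℝ) 1, ENNReal.ofReal (|qinv (F i) u - qinv (G i) u| ^ p) := by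
  have hF' : ∀ i t, F i t = ((μ.map fun z => z i) (Iic t)).toReal := fun i t => by
    rw [hF, Measure.map_apply (measurable_pi_apply i) measurableSet_Iic]; rfl
  have hG' : ∀ i t, G i t = ((ν.map fun z => z i) (Iic t)).toReal := fun i t => by
    rw [hG, Measure.map_apply (measurable_pi_apply i) measurableSet_Iic]; rfl
  have hpμ : ∀ i, IsProbabilityMeasure (μ.map fun z => z i) := fun i =>
    Measure.isProbabilityMeasure_map (measurable_pi_apply i).aemeasurable
  have hpν : ∀ i, IsProbabilityMeasure (ν.map fun z => z i) := fun i =>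
    Measure.isProbabilityMeasure_map (measurable_pi_apply i).aemeasurable
  have haeF := fun i => aemeasurable_qinv _ (hF' i)
  have haeG := fun i => aemeasurable_qinv _ (hG' i)
  have hae2 := fun i => (haeF i).prodMk (haeG i)
  have hτ : ∀ i, IsProbabilityMeasure (quantileCoupling (F i) (G i)) := fun i =>
    Measure.isProbabilityMeasure_map (hae2 i)
  have hcost : ∀ i, ∫⁻ z, ENNReal.ofReal (|z.1 - z.2| ^ p) ∂(quantileCoupling (F i) (G i))
      = ∫⁻ u in Ioo (0:ℝ) 1, ENNReal.ofReal (|qinv (F i) u - qinv (G i) u| ^ p) := fun i =>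
    lintegral_map' (by fun_prop) (hae2 i)
  have haeFpi : AEMeasurable (fun u i => qinv (F i) u) (volume.restrict (Ioo (0:ℝ) 1)) :=
    aemeasurable_pi_iff.2 haeF
  have haeGpi : AEMeasurable (fun u i => qinv (G i) u) (volume.restrict (Ioo (0:ℝ) 1)) :=
    aemeasurable_pi_iff.2 haeG
  have hmapF := map_quantile hd μ F hF' hμM
  have hmapG := map_quantile hd ν G hG' hνM
  have hsplit : ∀ π : Measure ((Fin d → ℝ) × (Fin d → ℝ)),
      ∫⁻ z, ENNReal.ofReal (∑ i, |z.1 i - z.2 i| ^ p) ∂π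
        = ∑ i, ∫⁻ z, ENNReal.ofReal (|z.1 - z.2| ^ p) ∂(π.map fun z => (z.1 i, z.2 i)) := by
    intro π
    simp_rw [ENNReal.ofReal_sum_of_nonneg fun i _ => Real.rpow_nonneg (abs_nonneg _) p]
    rw [lintegral_finsetSum _ fun i _ => by fun_prop]
    refine Finset.sum_congr rfl fun i _ => ?_
    rw [lintegral_map (by fun_prop) (by fun_prop)]
  have main : WpPowD d p μ ν
      = ∑ i, ∫⁻ z, ENNReal.ofReal (|z.1 - z.2| ^ p) ∂(quantileCoupling (F i) (G i)) := by
    apply le_antisymm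
    -- one uniform variable drives all coordinates of both laws: this coupling is optimal in each
    -- coordinate simultaneously
    · refine (iInf₂_le ((volume.restrict (Ioo (0:ℝ) 1)).map
        fun u => ((fun i => qinv (F i) u), (fun i => qinv (G i) u))) ?_).trans_eq ?_
      · constructor
        · rw [AEMeasurable.map_map_of_aemeasurable measurable_fst.aemeasurable
            (haeFpi.prodMk haeGpi)]
          exact hmapF
        · rw [AEMeasurable.map_map_of_aemeasurable measurable_snd.aemeasurable
            (haeFpi.prodMk haeGpi)]
          exact hmapG
      · rw [hsplit]
        refine Finset.sum_congr rfl fun i _ => ?_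
        rw [AEMeasurable.map_map_of_aemeasurable (by fun_prop) (haeFpi.prodMk haeGpi)]
        rfl
    -- each coordinate projection of a coupling couples the corresponding marginals
    · refine le_iInf₂ fun π hπ => ?_
      rw [hsplit]
      refine Finset.sum_le_sum fun i _ => ?_
      have hm : Measurable fun z : (Fin d → ℝ) × (Fin d → ℝ) => (z.1 i, z.2 i) := by fun_prop
      have hπp : IsProbabilityMeasure π := by
        refine ⟨?_⟩
        have := congrArg (fun ρ => ρ univ) hπ.1
        simpa [Measure.map_apply measurable_fst MeasurableSet.univ] using this
      have := Measure.isProbabilityMeasure_map (μ := π) hm.aemeasurable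
      have hf : (π.map fun z => (z.1 i, z.2 i)).map Prod.fst = μ.map fun z => z i := by
        rw [← hπ.1, Measure.map_map measurable_fst hm,
          Measure.map_map (measurable_pi_apply i) measurable_fst]
        rfl
      have hs : (π.map fun z => (z.1 i, z.2 i)).map Prod.snd = ν.map fun z => z i := by
        rw [← hπ.2, Measure.map_map measurable_snd hm,
          Measure.map_map (measurable_pi_apply i) measurable_snd]
        rfl
      refine lintegral_abs_rpow_mono hp ?_ ?_ fun x y => ?_
      · rw [hf, ← hmapF, quantileCoupling,
          AEMeasurable.map_map_of_aemeasurable measurable_fst.aemeasurable (hae2 i),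
          AEMeasurable.map_map_of_aemeasurable (measurable_pi_apply i).aemeasurable haeFpi]
        rfl
      · rw [hs, ← hmapG, quantileCoupling,
          AEMeasurable.map_map_of_aemeasurable measurable_snd.aemeasurable (hae2 i),
          AEMeasurable.map_map_of_aemeasurable (measurable_pi_apply i).aemeasurable haeGpi]
        rfl
      · rw [quantileCoupling_Iic (hF' i) (hG' i), ← hf, ← hs,
          Measure.map_apply measurable_fst measurableSet_Iic,
          Measure.map_apply measurable_snd measurableSet_Iic]
        exact le_min (measure_mono fun z hz => hz.1) (measure_mono fun z hz => hz.2)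
  refine ⟨fun πs hπs => ?_, by simpa only [hcost] using main⟩
  rw [main]
  refine Finset.sum_congr rfl fun i _ => ?_
  have := (hπs i).1
  rw [ext_of_Iic_prod fun x y =>
    ((hπs i).2 x y).trans (quantileCoupling_Iic (hF' i) (hG' i) x y).symm]
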